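/- arXiv:2402.04512 — 2 statements merged into one kernel-verified Lean document; each statement's English description precedes it below -/
import Mathlib

section
/- Let r ≥ 1, and for each i = 1, …, r let P_i be a finite nonempty index set and let γ_{i,p}, α_{i,p} ∈ ℕ be nonnegative integers indexed by p ∈ P_i, such that min_{p ∈ P_i} γ_{i,p} = 0 for every i. Then max over all tuples (p₁, …, p_r) ∈ P₁ × ⋯ × P_r of the quantity [max(γ_{1,p₁} + ⋯ + γ_{r,p_r}, α_{1,p₁} + ⋯ + α_{r,p_r}) − (γ_{1,p₁} + ⋯ + γ_{r,p_r})] is equal to the sum over i = 1, …, r of max over p ∈ P_i of [max(γ_{i,p}, α_{i,p}) − γ_{i,p}]. -/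
/-! Since `max a b - a` is the truncated difference `b - a`, both sides are built from truncated
differences. Truncated subtraction satisfies `∑ α - ∑ γ ≤ ∑ (α - γ)`, with equality as soon as
`γ ≤ α` termwise. If some `q` has `γ i q ≤ α i q`, the largest value of `α i q - γ i q` is attained
at such a `q`, so the factorwise maximizers can be chosen to form a tuple at which nothing is
truncated, and there the bound is an equality. A point where `γ i` vanishes is such a `q`. -/

theorem sum_tsub_sum_le_sum_tsub {ι M : Type*} [AddCommMonoid M] [Preorder M]
    [IsOrderedAddMonoid M] [Sub M] [OrderedSub M] (s : Finset ι) (f g : ι → M) :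
    ∑ i ∈ s, f i - ∑ i ∈ s, g i ≤ ∑ i ∈ s, (f i - g i) := by
  rw [tsub_le_iff_right, ← Finset.sum_add_distrib]
  exact Finset.sum_le_sum fun i _ => le_tsub_add

section CanonicallyOrdered

variable {M : Type*} [AddCommMonoid M] [LinearOrder M] [CanonicallyOrderedAdd M] [Sub M]
  [OrderedSub M]

theorem max_tsub_left_eq_tsub (a b : M) : max a b - a = b - a := by
  rcases le_total a b with h | h
  · rw [max_eq_right h]
  · rw [max_eq_left h, tsub_self, tsub_eq_zero_of_le h]

theorem exists_le_and_tsub_eq_sup_tsub [OrderBot M] {β : Type*} {s : Finset β} {f g : β → M}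
    (h : ∃ q ∈ s, g q ≤ f q) :
    ∃ q ∈ s, g q ≤ f q ∧ f q - g q = s.sup fun q => f q - g q := by
  obtain ⟨z, hz, hgf⟩ := h
  obtain ⟨q, hq, hsup⟩ := s.exists_mem_eq_sup ⟨z, hz⟩ fun q => f q - g q
  rcases le_total (g q) (f q) with hle | hle
  · exact ⟨q, hq, hle, hsup.symm⟩
  · have sup_eq_zero : (s.sup fun q => f q - g q) = 0 := hsup.trans (tsub_eq_zero_of_le hle)
    have tsub_le_sup : f z - g z ≤ s.sup fun q => f q - g q :=
      Finset.le_sup (f := fun q => f q - g q) hz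
    exact ⟨z, hz, hgf, tsub_le_sup.antisymm (sup_eq_zero.trans_le zero_le)⟩

variable [IsOrderedCancelAddMonoid M] [OrderBot M] {I : Type*} [Fintype I] [DecidableEq I]
  {ι : I → Type*} [∀ i, Fintype (ι i)] {γ α : ∀ i, ι i → M}

theorem sup_sum_tsub_sum_eq_sum_sup_tsub (h : ∀ i, ∃ q, γ i q ≤ α i q) :
    (Finset.univ.sup fun p : ∀ i, ι i => ∑ i, α i (p i) - ∑ i, γ i (p i)) =
      ∑ i, Finset.univ.sup fun q : ι i => α i q - γ i q := by
  apply le_antisymm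
  · refine Finset.sup_le fun p _ => (sum_tsub_sum_le_sum_tsub _ _ _).trans ?_
    exact Finset.sum_le_sum fun i _ =>
      Finset.le_sup (f := fun q => α i q - γ i q) (Finset.mem_univ (p i))
  · have exists_maximizer (i : I) :
        ∃ q, γ i q ≤ α i q ∧ α i q - γ i q = Finset.univ.sup fun q => α i q - γ i q := by
      simpa using exists_le_and_tsub_eq_sup_tsub (s := Finset.univ) (by simpa using h i)
    choose p hle hsup using exists_maximizer
    calc ∑ i, Finset.univ.sup (fun q : ι i => α i q - γ i q)
        = ∑ i, (α i (p i) - γ i (p i)) := Finset.sum_congr rfl fun i _ => (hsup i).symm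
      _ = ∑ i, α i (p i) - ∑ i, γ i (p i) := Finset.sum_tsub_distrib _ fun i _ => hle i
      _ ≤ _ := Finset.le_sup (f := fun p : ∀ i, ι i => ∑ i, α i (p i) - ∑ i, γ i (p i))
        (Finset.mem_univ p)

theorem multiplicative_thom_sebastiani_exponent_identity_general
    (h : ∀ i, ∃ q, γ i q ≤ α i q) :
    (Finset.univ.sup fun p : ∀ i, ι i =>
        max (∑ i, γ i (p i)) (∑ i, α i (p i)) - ∑ i, γ i (p i)) =
      ∑ i, Finset.univ.sup fun q : ι i => max (γ i q) (α i q) - γ i q := by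
  simpa only [max_tsub_left_eq_tsub] using sup_sum_tsub_sum_eq_sum_sup_tsub h

end CanonicallyOrdered

/-- The combinatorial identity of exponents of a fixed prime used in the
proof of the main lemma: if for each `i` the finitely many nonnegative integers `γ i p`
(`p` ranging over a finite nonempty index set) have minimum `0`, then the maximum over all
tuples `p` of `max (∑ γ) (∑ α) - ∑ γ` equals the sum over `i` of the maximum over `p` of
`max (γ i p) (α i p) - γ i p`. -/
theorem multiplicative_thom_sebastiani_exponent_identity
    (r : ℕ) (hr : 1 ≤ r) (ι : Fin r → Type*) [∀ i, Fintype (ι i)] [∀ i, Nonempty (ι i)]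
    (γ α : ∀ i, ι i → ℕ) (hγ : ∀ i, Finset.univ.inf' Finset.univ_nonempty (γ i) = 0) :
    (Finset.univ.sup fun p : ∀ i, ι i =>
        max (∑ i, γ i (p i)) (∑ i, α i (p i)) - ∑ i, γ i (p i)) =
      ∑ i, Finset.univ.sup fun q : ι i => max (γ i q) (α i q) - γ i q := by
  refine multiplicative_thom_sebastiani_exponent_identity_general fun i => ?_
  exact ((Finset.inf'_le_iff _).1 (hγ i).le).imp fun q hq => hq.2.trans zero_le
end

section
/- Let r ≥ 1, and for each i = 1, …, r let P_i be a finite nonempty index set and let γ_{i,p}, α_{i,p} ∈ ℕ be nonnegative integers indexed by p ∈ P_i, such that min_{p ∈ P_i} γ_{i,p} = 0 for every i. Then for every fixed tuple (p₁, …, p_r) ∈ P₁ × ⋯ × P_r there exists a tuple (q₁, …, q_r) ∈ P₁ × ⋯ × P_r such that max(γ_{1,p₁}, α_{1,p₁}) + ⋯ + max(γ_{r,p_r}, α_{r,p_r}) + (γ_{1,q₁} + ⋯ + γ_{r,q_r}) ≤ max(γ_{1,q₁} + ⋯ + γ_{r,q_r}, α_{1,q₁} + ⋯ + α_{r,q_r})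 + (γ_{1,p₁} + ⋯ + γ_{r,p_r}). -/
/-!
The inequality splits into one inequality per index `i`, namely
`max (γ i (p i)) (α i (p i)) + γ i (q i) ≤ α i (q i) + γ i (p i)`. If `γ i (p i) ≤ α i (p i)`,
then `q i = p i` gives equality. Otherwise the maximum is `γ i (p i)` and cancels, so any `q i` with
`γ i (q i) ≤ α i (q i)` will do; a zero of `γ i` is one.
-/

theorem exists_max_add_le_add {ι M : Type*} [AddCommMagma M] [LinearOrder M] [AddLeftMono M]
    {γ α : ι → M} (h : ∃ z, γ z ≤ α z) (p : ι) :
    ∃ q, max (γ p) (α p) + γ q ≤ α q + γ p := by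
  rcases le_total (γ p) (α p) with hp | hp
  · exact ⟨p, by rw [max_eq_right hp]⟩
  · obtain ⟨z, hz⟩ := h
    refine ⟨z, ?_⟩
    calc max (γ p) (α p) + γ z = γ p + γ z := by rw [max_eq_left hp]
      _ ≤ γ p + α z := by gcongr
      _ = α z + γ p := add_comm _ _

theorem multiplicative_thom_sebastiani_exponent_step_general {κ M : Type*} [Fintype κ]
    [AddCommMonoid M] [LinearOrder M] [IsOrderedAddMonoid M] {ι : κ → Type*}
    {γ α : ∀ i, ι i → M} (h : ∀ i, ∃ z, γ i z ≤ α i z) (p : ∀ i, ι i) :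
    ∃ q : ∀ i, ι i,
      (∑ i, max (γ i (p i)) (α i (p i))) + ∑ i, γ i (q i) ≤
        ∑ i, α i (q i) + ∑ i, γ i (p i) := by
  choose q hq using fun i => exists_max_add_le_add (h i) (p i)
  refine ⟨q, ?_⟩
  simpa only [Finset.sum_add_distrib] using Finset.sum_le_sum fun i (_ : i ∈ Finset.univ) => hq i

/-- The key combinatorial step in the proof of the main lemma: if for each
`i` the finitely many nonnegative integers `γ i p` have minimum `0`, then for every tuple
`p` there is a tuple `q` with
`∑ max (γ i (p i)) (α i (p i)) - ∑ γ i (p i) ≤ max (∑ γ i (q i)) (∑ α i (q i)) - ∑ γ i (q i)`,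
stated additively to avoid truncated subtraction. -/
theorem multiplicative_thom_sebastiani_exponent_step
    (r : ℕ) (hr : 1 ≤ r) (ι : Fin r → Type*) [∀ i, Fintype (ι i)] [∀ i, Nonempty (ι i)]
    (γ α : ∀ i, ι i → ℕ) (hγ : ∀ i, Finset.univ.inf' Finset.univ_nonempty (γ i) = 0)
    (p : ∀ i, ι i) :
    ∃ q : ∀ i, ι i,
      (∑ i, max (γ i (p i)) (α i (p i))) + ∑ i, γ i (q i) ≤
        max (∑ i, γ i (q i)) (∑ i, α i (q i)) + ∑ i, γ i (p i) := by
  have exists_le (i) : ∃ z, γ i z ≤ α i z :=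
    ((Finset.inf'_le_iff _).mp (hγ i).le).imp fun _ hz => hz.2.trans (Nat.zero_le _)
  obtain ⟨q, hq⟩ := multiplicative_thom_sebastiani_exponent_step_general exists_le p
  exact ⟨q, hq.trans (Nat.add_le_add_right (le_max_right _ _) _)⟩
end
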